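/- Let □ := ∂_t² − Δ be the discrete d'Alembert operator on ℤ^d. Then every u ∈ C²([0,T]; ℓ²(ℤ^d)) satisfies, for all t ∈ [0,T], the sharp energy estimate ‖u'(·,t)‖_{ℓ²(ℤ^d)} ≤ ‖u'(·,0)‖_{ℓ²(ℤ^d)} + ∫_0^t ‖□u(·,s)‖_{ℓ²(ℤ^d)} ds, where ‖u'(·,t)‖_{ℓ²(ℤ^d)}² := Σ_{m∈ℤ^d} ( |∂_t u(m,t)|² + Σ_{j=1}^d |∂_j u(m,t)|² ). -/

import Mathlib

/-!
Translation by `eⱼ` is a unitary `τⱼ` of `ℓ²(ℤ^d)`, and the numbers `-4/(π(4a² - 1))` are the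
Fourier coefficients of `z ↦ |1 - z|` on the circle. Continuous functional calculus turns this
absolutely convergent Fourier series into `∂ⱼ = i|1 - τⱼ|`, whence
`∂ⱼ†∂ⱼ = |1 - τⱼ|² = 2 - τⱼ - τⱼ†`, and these operators sum to `-Δ`. With `∇ = (∂₁, …, ∂_d)` the
state `z = (∂ₜu, ∇u)` therefore satisfies
`Re ⟨z, z'⟩ = Re ⟨∂ₜu, ∂ₜ²u + ∇†∇u⟩ = Re ⟨∂ₜu, □u⟩ ≤ ‖z‖ ‖□u‖`,
that is `‖z‖' ≤ ‖□u‖` wherever `z ≠ 0`, and integrating in time gives the estimate.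
-/

open scoped BigOperators ENNReal NNReal
open MeasureTheory Filter

noncomputable section

/-- Kernel `φⱼ` of the discrete partial derivative on `ℤ^d`:
`φⱼ(m) = -4i/(π(4a²-1))` if `m = a·eⱼ`, and `0` otherwise. -/
def phi (d : ℕ) (j : Fin d) (m : Fin d → ℤ) : ℂ :=
  if ∀ i, i ≠ j → m i = 0 then
    (-4 * Complex.I) / ((Real.pi : ℂ) * (4 * (m j : ℂ) ^ 2 - 1))
  else 0

/-- Discrete convolution on `ℤ^d`. -/
def dconv {d : ℕ} (u v : (Fin d → ℤ) → ℂ) (k : Fin d → ℤ) : ℂ :=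
  ∑' m, u m * v (k - m)

/-- Discrete partial derivative `∂ⱼ u = u ∗ φⱼ`. -/
def pd {d : ℕ} (j : Fin d) (u : (Fin d → ℤ) → ℂ) : (Fin d → ℤ) → ℂ :=
  dconv u (phi d j)

/-- Japanese bracket `⟨m⟩ = (1+|m|²)^{1/2}`. -/
def jap {d : ℕ} (m : Fin d → ℤ) : ℝ :=
  Real.sqrt (1 + ∑ i, ((m i : ℝ)) ^ 2)

open scoped Classical in
/-- `ℓ^p` norm on `ℤ^d` (valued in `ℝ≥0∞`), `1 ≤ p ≤ ∞`. -/
def lpn {d : ℕ} (p : ℝ≥0∞) (f : (Fin d → ℤ) → ℂ) : ℝ≥0∞ :=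
  if p = ⊤ then ⨆ m, (‖f m‖₊ : ℝ≥0∞)
  else (∑' m, (‖f m‖₊ : ℝ≥0∞) ^ p.toReal) ^ (1 / p.toReal)

/-- Weighted `ℓ^{2,k}` norm: the `ℓ²` norm of `m ↦ ⟨m⟩^k f(m)`. -/
def w2 {d : ℕ} (k : ℕ) (f : (Fin d → ℤ) → ℂ) : ℝ≥0∞ :=
  lpn 2 (fun m => ((jap m ^ k : ℝ) : ℂ) * f m)

/-- Discrete Laplacian on `ℤ^d`. -/
def lap {d : ℕ} (u : (Fin d → ℤ) → ℂ) (x : Fin d → ℤ) : ℂ :=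
  ∑ j, (u (x + Pi.single j 1) + u (x - Pi.single j 1) - 2 * u x)

/-- Continuity of a curve `t ↦ f(·,t)` into `ℓ^{2,k}(ℤ^d)` on a set `S` of times. -/
def ContW {d : ℕ} (k : ℕ) (S : Set ℝ) (f : ℝ → (Fin d → ℤ) → ℂ) : Prop :=
  ∀ t ∈ S, Tendsto (fun s => w2 k (fun m => f s m - f t m))
    (nhdsWithin t S) (nhds (0 : ℝ≥0∞))

/-- `f'` is the derivative (in the `ℓ^{2,k}(ℤ^d)` norm) of the curve `t ↦ f(·,t)` on `S`. -/
def DerivW {d : ℕ} (k : ℕ) (S : Set ℝ) (f f' : ℝ → (Fin d → ℤ) → ℂ) : Prop :=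
  ∀ t ∈ S, Tendsto
    (fun s => w2 k (fun m => (s - t)⁻¹ • (f s m - f t m) - f' t m))
    (nhdsWithin t (S \ {t})) (nhds (0 : ℝ≥0∞))

/-- `u ∈ C²(S; ℓ^{2,k}(ℤ^d))`, with first and second time derivatives `u1`, `u2`. -/
structure IsC2 {d : ℕ} (k : ℕ) (S : Set ℝ) (u u1 u2 : ℝ → (Fin d → ℤ) → ℂ) : Prop where
  mem0 : ∀ t ∈ S, w2 k (u t) < ⊤
  mem1 : ∀ t ∈ S, w2 k (u1 t) < ⊤
  mem2 : ∀ t ∈ S, w2 k (u2 t) < ⊤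
  cont0 : ContW k S u
  cont1 : ContW k S u1
  cont2 : ContW k S u2
  hder1 : DerivW k S u u1
  hder2 : DerivW k S u1 u2

section EnergyEstimate

variable {𝕜 : Type*} [RCLike 𝕜] {a b : ℝ}

lemma hasDerivWithinAt_norm_sq_of_inner {E : Type*} [NormedAddCommGroup E] [InnerProductSpace 𝕜 E]
    [NormedSpace ℝ E] {z : ℝ → E} {z' : E} {S : Set ℝ} {t : ℝ} (hz : HasDerivWithinAt z z' S t) :
    HasDerivWithinAt (fun s => ‖z s‖ ^ 2) (2 * RCLike.re (inner 𝕜 (z t) z')) S t := by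
  have h := RCLike.reCLM.hasFDerivAt.comp_hasDerivWithinAt t (hz.inner 𝕜 hz)
  simpa [Function.comp_def, inner_self_eq_norm_sq, inner_re_symm (𝕜 := 𝕜) z' (z t), two_mul] using h

lemma norm_le_add_integral_of_re_inner_le {E : Type*} [NormedAddCommGroup E]
    [InnerProductSpace 𝕜 E] [NormedSpace ℝ E] {z z' : ℝ → E} {g : ℝ → ℝ} (hab : a ≤ b)
    (hz : ContinuousOn z (Set.Icc a b))
    (hz' : ∀ s ∈ Set.Ioo a b, HasDerivWithinAt z (z' s) (Set.Ioi s) s)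
    (hg : IntegrableOn g (Set.Icc a b)) (hg0 : ∀ s ∈ Set.Ioo a b, 0 ≤ g s)
    (hle : ∀ s ∈ Set.Ioo a b, RCLike.re (inner 𝕜 (z s) (z' s)) ≤ ‖z s‖ * g s) :
    ‖z b‖ ≤ ‖z a‖ + ∫ s in a..b, g s := by
  -- The norm is not differentiable at `0`, so estimate `√(‖z‖² + ε²)` instead.
  have regularized (ε : ℝ) (hε : 0 < ε) :
      √(‖z b‖ ^ 2 + ε ^ 2) - √(‖z a‖ ^ 2 + ε ^ 2) ≤ ∫ s in a..b, g s := by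
    have hpos (s : ℝ) : 0 < ‖z s‖ ^ 2 + ε ^ 2 := by positivity
    refine intervalIntegral.sub_le_integral_of_hasDeriv_right_of_le hab
      ((hz.norm.pow 2).add_const _).sqrt
      (fun s hs => ((hasDerivWithinAt_norm_sq_of_inner (𝕜 := 𝕜) (hz' s hs)).add_const _).sqrt
        (hpos s).ne') hg fun s hs => ?_
    rw [div_le_iff₀ (by positivity)]
    have hnorm : ‖z s‖ ≤ √(‖z s‖ ^ 2 + ε ^ 2) := Real.le_sqrt_of_sq_le (by nlinarith)
    nlinarith [hle s hs, mul_le_mul_of_nonneg_right hnorm (hg0 s hs)]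
  refine le_of_forall_pos_le_add fun ε hε => ?_
  have hb : ‖z b‖ ≤ √(‖z b‖ ^ 2 + ε ^ 2) := Real.le_sqrt_of_sq_le (by nlinarith)
  have ha : √(‖z a‖ ^ 2 + ε ^ 2) ≤ ‖z a‖ + ε := by
    rw [Real.sqrt_le_left (by positivity)]
    nlinarith [norm_nonneg (z a)]
  linarith [regularized ε hε]

lemma wave_energy_estimate {H G : Type*}
    [NormedAddCommGroup H] [InnerProductSpace 𝕜 H] [CompleteSpace H]
    [NormedAddCommGroup G] [InnerProductSpace 𝕜 G] [CompleteSpace G]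
    [NormedSpace ℝ H] [NormedSpace ℝ G] [IsScalarTower ℝ 𝕜 H] [IsScalarTower ℝ 𝕜 G]
    (D : H →L[𝕜] G) {u v w : ℝ → H} (hab : a ≤ b)
    (hu : ∀ s ∈ Set.Icc a b, HasDerivWithinAt u (v s) (Set.Icc a b) s)
    (hv : ∀ s ∈ Set.Icc a b, HasDerivWithinAt v (w s) (Set.Icc a b) s)
    (hw : ContinuousOn w (Set.Icc a b)) :
    ‖WithLp.toLp 2 (v b, D (u b))‖ₑ ≤ ‖WithLp.toLp 2 (v a, D (u a))‖ₑ +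
      ∫⁻ s in Set.Icc a b, ‖w s + D.adjoint (D (u s))‖ₑ := by
  set z : ℝ → WithLp 2 (H × G) := fun s => WithLp.toLp 2 (v s, D (u s))
  set box : ℝ → H := fun s => w s + D.adjoint (D (u s))
  have hz : ∀ s ∈ Set.Icc a b,
      HasDerivWithinAt z (WithLp.toLp 2 (w s, D (v s))) (Set.Icc a b) s := fun s hs =>
    (WithLp.prodContinuousLinearEquiv 2 ℝ H G).symm.hasFDerivAt.comp_hasDerivWithinAt s <|
      (hv s hs).prodMk ((D.restrictScalars ℝ).hasFDerivAt.comp_hasDerivWithinAt s (hu s hs))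
  have hbox : ContinuousOn box (Set.Icc a b) :=
    hw.add (((D.adjoint).continuous.comp D.continuous).comp_continuousOn
      fun s hs => (hu s hs).continuousWithinAt)
  have power (s : ℝ) :
      RCLike.re (inner 𝕜 (z s) (WithLp.toLp 2 (w s, D (v s)))) ≤ ‖z s‖ * ‖box s‖ := by
    have hinner : RCLike.re (inner 𝕜 (z s) (WithLp.toLp 2 (w s, D (v s)))) =
        RCLike.re (inner 𝕜 (v s) (box s)) := by
      simp only [z, box, WithLp.prod_inner_apply, inner_add_right, map_add,
        D.adjoint_inner_right, inner_re_symm (𝕜 := 𝕜) (D (u s)) (D (v s))]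
    calc _ = RCLike.re (inner 𝕜 (v s) (box s)) := hinner
      _ ≤ ‖v s‖ * ‖box s‖ := re_inner_le_norm _ _
      _ ≤ ‖z s‖ * ‖box s‖ := by gcongr; exact WithLp.norm_fst_le H (z s)
  have estimate : ‖z b‖ ≤ ‖z a‖ + ∫ s in a..b, ‖box s‖ :=
    norm_le_add_integral_of_re_inner_le (𝕜 := 𝕜) hab (fun s hs => (hz s hs).continuousWithinAt)
      (fun s hs => ((hz s (Set.Ioo_subset_Icc_self hs)).hasDerivAt
        (Icc_mem_nhds hs.1 hs.2)).hasDerivWithinAt)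
      hbox.norm.integrableOn_Icc (fun s _ => norm_nonneg _) fun s _ => power s
  have hint : ENNReal.ofReal (∫ s in a..b, ‖box s‖) = ∫⁻ s in Set.Icc a b, ‖box s‖ₑ := by
    rw [intervalIntegral.integral_of_le hab, ← integral_Icc_eq_integral_Ioc,
      ofReal_integral_norm_eq_lintegral_enorm hbox.integrableOn_Icc]
  rw [← hint, ← ofReal_norm, ← ofReal_norm, ← ENNReal.ofReal_add (norm_nonneg _)
    (intervalIntegral.integral_nonneg hab fun s _ => norm_nonneg _)]
  exact ENNReal.ofReal_le_ofReal estimate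

end EnergyEstimate

section FourierSeries

/-- The convolution kernel of `(-Δ)^{1/2}` on `ℤ`: the Fourier coefficients of `z ↦ |1 - z|` on the
circle, where `|1 - z|²` is the symbol of `-Δ`. -/
def sqrtLapKernel (a : ℤ) : ℂ := -4 / (Real.pi * (4 * a ^ 2 - 1))

lemma summable_sqrtLapKernel : Summable sqrtLapKernel := by
  have hsq : Summable fun a : ℤ => 4 / Real.pi * (1 / (a : ℝ) ^ 2) :=
    (Real.summable_one_div_int_pow.2 one_lt_two).mul_left _
  refine hsq.of_norm_bounded_eventually ?_
  filter_upwards [(Set.finite_singleton (0 : ℤ)).compl_mem_cofinite] with a ha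
  have ha1 : (1 : ℝ) ≤ (a : ℝ) ^ 2 := by
    exact_mod_cast Int.one_le_abs ha |> (one_le_sq_iff_one_le_abs _).2
  have hnorm : ‖sqrtLapKernel a‖ = 4 / (Real.pi * (4 * (a : ℝ) ^ 2 - 1)) := by
    have hcast : sqrtLapKernel a = ((-4 / (Real.pi * (4 * (a : ℝ) ^ 2 - 1)) : ℝ) : ℂ) := by
      simp [sqrtLapKernel]
    rw [hcast, Complex.norm_real, Real.norm_eq_abs, abs_div, abs_neg, abs_of_pos four_pos,
      abs_of_pos (mul_pos Real.pi_pos (by linarith))]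
  rw [hnorm, div_mul_div_comm, mul_one]
  gcongr
  linarith

lemma integral_exp_odd_mul_pi_mul_I (k : ℤ) :
    ∫ x : ℝ in 0..1, Complex.exp (-((2 * k + 1) * Real.pi * Complex.I) * x) =
      2 / ((2 * k + 1) * Real.pi * Complex.I) := by
  have hodd : (2 * (k : ℂ) + 1) ≠ 0 := by exact_mod_cast (by omega : 2 * k + 1 ≠ 0)
  have hne : -((2 * k + 1) * Real.pi * Complex.I) ≠ 0 := by
    simp [hodd, Real.pi_ne_zero, Complex.I_ne_zero]
  have hexp : Complex.exp (-((2 * k + 1) * Real.pi * Complex.I)) = -1 := by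
    rw [show -((2 * k + 1) * Real.pi * Complex.I) =
        Real.pi * Complex.I - ((k + 1 : ℤ) : ℂ) * (2 * Real.pi * Complex.I) by push_cast; ring,
      Complex.exp_periodic.sub_int_mul_eq, Complex.exp_pi_mul_I]
  rw [integral_exp_mul_complex hne, Complex.ofReal_one, mul_one, hexp, Complex.ofReal_zero,
    mul_zero, Complex.exp_zero, div_neg, ← neg_div]
  norm_num

lemma fourier_neg_mul_two_sin (a : ℤ) (x : ℝ) :
    fourier (-a) (x : UnitAddCircle) * (2 * Real.sin (Real.pi * x)) =
      Complex.I * (Complex.exp (-((2 * a + 1) * Real.pi * Complex.I) * x) -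
        Complex.exp (-((2 * (a - 1 : ℤ) + 1) * Real.pi * Complex.I) * x)) := by
  have hsplit (k : ℤ) : Complex.exp (-((2 * k + 1) * Real.pi * Complex.I) * x) =
      Complex.exp (2 * Real.pi * Complex.I * (-a : ℤ) * x / (1 : ℝ)) *
        Complex.exp ((a - k - 1 / 2) * (2 * Real.pi * x * Complex.I)) := by
    rw [← Complex.exp_add]
    push_cast
    ring_nf
  rw [fourier_coe_apply, hsplit, hsplit]
  push_cast
  rw [Complex.two_sin]
  ring_nf

lemma norm_one_sub_fourier_one {x : ℝ} (hx : x ∈ Set.Icc (0 : ℝ) 1) :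
    ‖1 - fourier 1 (x : UnitAddCircle)‖ = 2 * Real.sin (Real.pi * x) := by
  have hsin : 0 ≤ Real.sin (Real.pi * x) := Real.sin_nonneg_of_nonneg_of_le_pi
    (mul_nonneg Real.pi_nonneg hx.1) (mul_le_of_le_one_right Real.pi_nonneg hx.2)
  have hchord := Complex.norm_exp_I_mul_ofReal_sub_one (2 * Real.pi * x)
  rw [show 2 * Real.pi * x / 2 = Real.pi * x by ring, Real.norm_of_nonneg (by positivity)] at hchord
  rw [← hchord, norm_sub_rev, fourier_coe_apply]
  congr 3
  push_cast
  ring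

lemma fourierCoeff_norm_one_sub_fourier_one (a : ℤ) :
    fourierCoeff (fun x : UnitAddCircle => (‖1 - fourier 1 x‖ : ℂ)) a = sqrtLapKernel a := by
  have hintegrand : ∀ x ∈ Set.uIcc (0 : ℝ) 1,
      fourier (-a) (x : UnitAddCircle) • (‖1 - fourier 1 (x : UnitAddCircle)‖ : ℂ) =
        Complex.I * (Complex.exp (-((2 * a + 1) * Real.pi * Complex.I) * x) -
          Complex.exp (-((2 * (a - 1 : ℤ) + 1) * Real.pi * Complex.I) * x)) := fun x hx => by
    rw [Set.uIcc_of_le zero_le_one] at hx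
    rw [norm_one_sub_fourier_one hx, smul_eq_mul, ← fourier_neg_mul_two_sin]
    push_cast
    rfl
  have hodd : (2 * (a : ℂ) + 1) ≠ 0 := by exact_mod_cast (by omega : 2 * a + 1 ≠ 0)
  have hodd' : (2 * (a : ℂ) - 1) ≠ 0 := by exact_mod_cast (by omega : 2 * a - 1 ≠ 0)
  calc fourierCoeff (fun x : UnitAddCircle => (‖1 - fourier 1 x‖ : ℂ)) a
      = ∫ x : ℝ in 0..1, Complex.I * (Complex.exp (-((2 * a + 1) * Real.pi * Complex.I) * x) -
          Complex.exp (-((2 * (a - 1 : ℤ) + 1) * Real.pi * Complex.I) * x)) := by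
        rw [fourierCoeff_eq_intervalIntegral _ _ 0, zero_add, one_div_one, one_smul]
        exact intervalIntegral.integral_congr hintegrand
    _ = Complex.I * (2 / ((2 * a + 1) * Real.pi * Complex.I) -
          2 / ((2 * (a - 1 : ℤ) + 1) * Real.pi * Complex.I)) := by
        rw [intervalIntegral.integral_const_mul, intervalIntegral.integral_sub
          (Continuous.intervalIntegrable (by fun_prop) _ _)
          (Continuous.intervalIntegrable (by fun_prop) _ _),
          integral_exp_odd_mul_pi_mul_I, integral_exp_odd_mul_pi_mul_I]
    _ = 2 / Real.pi * (1 / (2 * a + 1) - 1 / (2 * a - 1)) := by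
        push_cast
        rw [show 2 * ((a : ℂ) - 1) + 1 = 2 * a - 1 by ring]
        field_simp [Complex.I_ne_zero]
    _ = sqrtLapKernel a := by
        rw [sqrtLapKernel, show 4 * (a : ℂ) ^ 2 - 1 = (2 * a + 1) * (2 * a - 1) by ring]
        field_simp
        ring

lemma hasSum_sqrtLapKernel_mul_zpow {z : ℂ} (hz : ‖z‖ = 1) :
    HasSum (fun a : ℤ => sqrtLapKernel a * z ^ a) ‖1 - z‖ := by
  obtain ⟨x, rfl⟩ : ∃ x : UnitAddCircle, fourier 1 x = z := by
    obtain ⟨θ, rfl⟩ := (Complex.norm_eq_one_iff z).1 hz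
    refine ⟨((θ / (2 * Real.pi) : ℝ) : UnitAddCircle), ?_⟩
    rw [fourier_coe_apply]
    congr 1
    push_cast
    field_simp
  let f : C(UnitAddCircle, ℂ) := ⟨fun x => (‖1 - fourier 1 x‖ : ℂ), by fun_prop⟩
  have hcoeff : fourierCoeff f = sqrtLapKernel := funext fourierCoeff_norm_one_sub_fourier_one
  have h := has_pointwise_sum_fourier_series_of_summable (f := f)
    (hcoeff ▸ summable_sqrtLapKernel) x
  rw [hcoeff] at h
  simpa [f, fourier_apply, AddCircle.toCircle_zsmul] using h

end FourierSeries

lemma hasSum_cfc_of_summable {ι 𝕜 A : Type*} {p : A → Prop} [RCLike 𝕜] [Ring A] [StarRing A]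
    [TopologicalSpace A] [Algebra 𝕜 A] [ContinuousFunctionalCalculus 𝕜 A p] (a : A)
    {F : ι → 𝕜 → 𝕜} {c : ι → ℝ} (hc : Summable c)
    (hF : ∀ i, ContinuousOn (F i) (spectrum 𝕜 a)) (hle : ∀ i, ∀ x ∈ spectrum 𝕜 a, ‖F i x‖ ≤ c i) :
    HasSum (fun i => cfc (F i) a) (cfc (fun x => ∑' i, F i x) a) := by
  have h := tendsto_cfc_fun (a := a) (tendstoUniformlyOn_tsum hc hle)
    (.of_forall fun s => continuousOn_finsetSum s fun i _ => hF i)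
  refine h.congr fun s => ?_
  rw [← cfc_sum F a s fun i _ => hF i]
  congr 1; ext; simp

section SqrtLaplacian

variable {A : Type*} [CStarAlgebra A] [PartialOrder A] [StarOrderedRing A]

/-- The positive square root `|1 - U|` of the discrete Laplacian `2 - U - U†` attached to a unitary
`U`. It is set in an abstract C⋆-algebra: on `ℓ²` itself, instance search does not find the
real functional calculus that `CFC.abs` requires. -/
def sqrtLaplacian (U : unitary A) : A := CFC.abs (1 - (U : A))

lemma star_sqrtLaplacian_mul_self (U : unitary A) :
    star (sqrtLaplacian U) * sqrtLaplacian U = (1 - (U : A)) + (1 - star (U : A)) := by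
  rw [sqrtLaplacian, (CFC.abs_nonneg _).isSelfAdjoint.star_eq, CFC.abs_mul_abs, star_sub, star_one,
    sub_mul, mul_sub, mul_sub, Unitary.coe_star_mul_self U, one_mul, mul_one, one_mul]
  abel

lemma cfc_norm_one_sub (U : unitary A) :
    cfc (fun z : ℂ => (‖1 - z‖ : ℂ)) (U : A) = sqrtLaplacian U := by
  have hsub : cfc (fun z : ℂ => 1 - z) (U : A) = 1 - U := by
    rw [cfc_sub _ _ (U : A), cfc_const_one ℂ (U : A), cfc_id' ℂ (U : A)]
  have hnormal : IsStarNormal (1 - (U : A)) := hsub ▸ cfc_predicate (fun z : ℂ => 1 - z) (U : A)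
  rw [cfc_comp' (fun z : ℂ => (‖z‖ : ℂ)) (fun z => 1 - z) (U : A), hsub]
  exact (cfc_comp_norm (fun z : ℂ => z) (1 - (U : A))).trans (cfc_id' ℂ _)

lemma hasSum_sqrtLapKernel_smul_zpow (U : unitary A) :
    HasSum (fun a : ℤ => sqrtLapKernel a • ((U ^ a : unitary A) : A)) (sqrtLaplacian U) := by
  have hsphere {z : ℂ} (hz : z ∈ spectrum ℂ (U : A)) : ‖z‖ = 1 := by
    simpa using spectrum.subset_circle_of_unitary U.2 hz
  have hzpow (a : ℤ) : ContinuousOn (fun z : ℂ => z ^ a) (spectrum ℂ (U : A)) :=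
    continuousOn_id.zpow₀ a fun z hz => .inl (norm_ne_zero_iff.1 (by simp [hsphere hz]))
  have hterm (a : ℤ) : cfc (fun z => sqrtLapKernel a * z ^ a) (U : A) =
      sqrtLapKernel a • ((U ^ a : unitary A) : A) := by
    rw [cfc_const_mul _ _ (U : A) (hzpow a), ← Unitary.val_toUnits_apply U,
      cfc_zpow (Unitary.toUnits U) a (inferInstanceAs (IsStarNormal (U : A))), ← map_zpow,
      Unitary.val_toUnits_apply]
  have hsymbol : cfc (fun z => ∑' a : ℤ, sqrtLapKernel a * z ^ a) (U : A) =
      sqrtLaplacian U :=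
    (cfc_congr fun z hz => (hasSum_sqrtLapKernel_mul_zpow (hsphere hz)).tsum_eq).trans
      (cfc_norm_one_sub U)
  simp_rw [← hsymbol, ← hterm]
  refine hasSum_cfc_of_summable _ summable_sqrtLapKernel.norm
    (fun a => (hzpow a).const_smul (sqrtLapKernel a)) fun a z hz => ?_
  simp [hsphere hz]

end SqrtLaplacian

section Column

variable {𝕜 H K ι : Type*} [RCLike 𝕜] [Fintype ι]
  [NormedAddCommGroup H] [InnerProductSpace 𝕜 H] [CompleteSpace H]
  [NormedAddCommGroup K] [InnerProductSpace 𝕜 K] [CompleteSpace K]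

/-- The operator `f ↦ (D i f)ᵢ` into the `ℓ²` direct sum, such as the gradient of a family of
partial derivatives. -/
def column (D : ι → H →L[𝕜] K) : H →L[𝕜] PiLp 2 (fun _ : ι => K) :=
  (PiLp.continuousLinearEquiv 2 𝕜 (fun _ : ι => K)).symm ∘L ContinuousLinearMap.pi D

lemma adjoint_column_apply_column (D : ι → H →L[𝕜] K) (f : H) :
    (column D).adjoint (column D f) = ∑ i, (D i).adjoint (D i f) := by
  refine ext_inner_left 𝕜 fun g => ?_
  rw [ContinuousLinearMap.adjoint_inner_right, PiLp.inner_apply, inner_sum]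
  simp [column, ContinuousLinearMap.adjoint_inner_right]

end Column

section Translation

open scoped lp

lemma memℓp_comp_equiv {α β E : Type*} [NormedAddCommGroup E] {p : ℝ≥0∞} (hp : 0 < p.toReal)
    {f : β → E} (e : α ≃ β) (hf : Memℓp f p) : Memℓp (f ∘ e) p := by
  rw [memℓp_gen_iff hp] at hf ⊢
  exact e.summable_iff.2 hf

variable {G : Type*} [AddCommGroup G]

/-- Translation `f ↦ f(· - v)` as an isometry of `ℓ²(G)`; it underlies the representation
`translation`. -/
def lpTranslate (v : G) : ℓ^2(G, ℂ) ≃ₗᵢ[ℂ] ℓ^2(G, ℂ) where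
  toFun f := ⟨fun m => f (m - v), memℓp_comp_equiv (by norm_num) (Equiv.subRight v) (lp.memℓp f)⟩
  invFun f := ⟨fun m => f (m + v), memℓp_comp_equiv (by norm_num) (Equiv.addRight v) (lp.memℓp f)⟩
  map_add' _ _ := rfl
  map_smul' _ _ := rfl
  left_inv f := by ext m; simp
  right_inv f := by ext m; simp
  norm_map' f := by
    have h2 : 0 < (2 : ℝ≥0∞).toReal := by norm_num
    simp only [lp.norm_eq_tsum_rpow h2]
    exact congrArg (· ^ _) ((Equiv.subRight v).tsum_eq fun m => ‖f m‖ ^ (2 : ℝ≥0∞).toReal)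

@[simp] lemma lpTranslate_apply (v : G) (f : ℓ^2(G, ℂ)) (m : G) :
    lpTranslate v f m = f (m - v) := rfl

/-- The unitary representation of `G` on `ℓ²(G)` by translations. Its source is `Multiplicative G`
because unitaries form a multiplicative group. -/
def translation : Multiplicative G →* unitary (ℓ^2(G, ℂ) →L[ℂ] ℓ^2(G, ℂ)) :=
  Unitary.linearIsometryEquiv.symm.toMonoidHom.comp
    { toFun v := lpTranslate v.toAdd
      map_one' := by ext f m; simp [lpTranslate]
      map_mul' v w := by ext f m; simp [lpTranslate_apply, sub_sub] }

@[simp] lemma translation_apply (v : G) (f : ℓ^2(G, ℂ)) (m : G) :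
    (translation (.ofAdd v) : ℓ^2(G, ℂ) →L[ℂ] ℓ^2(G, ℂ)) f m = f (m - v) := rfl

lemma star_translation (v : G) :
    star (translation (.ofAdd v)) = translation (G := G) (.ofAdd (-v)) := by
  rw [ofAdd_neg, map_inv]
  rfl

lemma hasSum_translation_zpow_apply {c : ℤ → ℂ} (v : G) {S : ℓ^2(G, ℂ) →L[ℂ] ℓ^2(G, ℂ)}
    (h : HasSum (fun a : ℤ => c a •
      ((translation (.ofAdd v) ^ a : unitary (ℓ^2(G, ℂ) →L[ℂ] ℓ^2(G, ℂ))) :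
        ℓ^2(G, ℂ) →L[ℂ] ℓ^2(G, ℂ))) S)
    (f : ℓ^2(G, ℂ)) (m : G) : HasSum (fun a : ℤ => c a * f (m - a • v)) (S f m) := by
  have heval := h.mapL ((lp.evalCLM ℂ (fun _ : G => ℂ) 2 m).comp (.apply ℂ ℓ^2(G, ℂ) f))
  simp only [← map_zpow, ← ofAdd_zsmul] at heval
  exact heval

end Translation

section Gradient

variable {d : ℕ}

/-- The Hilbert space `ℓ²(ℤ^d)`. -/
abbrev L2 (d : ℕ) := lp (fun _ : Fin d → ℤ => ℂ) 2

/-- The partial derivative `∂ⱼ = i|1 - τⱼ|` as a bounded operator on `ℓ²(ℤ^d)`; it agrees with the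
convolution operator `pd` by `coe_partialL2`. -/
def partialL2 (j : Fin d) : L2 d →L[ℂ] L2 d :=
  Complex.I • sqrtLaplacian (translation (.ofAdd (Pi.single j 1)))

lemma adjoint_partialL2_partialL2 (j : Fin d) (f : L2 d) (x : Fin d → ℤ) :
    (partialL2 j).adjoint (partialL2 j f) x =
      -(f (x + Pi.single j 1) + f (x - Pi.single j 1) - 2 * f x) := by
  have hI : star Complex.I * Complex.I = 1 := by simp
  rw [← ContinuousLinearMap.star_eq_adjoint, ← mul_apply_eq_comp, partialL2, star_smul,
    smul_mul_smul_comm, hI, one_smul, star_sqrtLaplacian_mul_self, ← Unitary.coe_star,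
    star_translation]
  simp only [add_apply, sub_apply, one_apply_eq_self, lp.coeFn_add, lp.coeFn_sub, Pi.add_apply,
    Pi.sub_apply, translation_apply, sub_neg_eq_add]
  ring

/-- The gradient `∇ = (∂₁, …, ∂_d)` on `ℓ²(ℤ^d)`. -/
def gradL2 (d : ℕ) : L2 d →L[ℂ] PiLp 2 (fun _ : Fin d => L2 d) := column partialL2

lemma adjoint_gradL2_gradL2 (f : L2 d) (x : Fin d → ℤ) :
    (gradL2 d).adjoint (gradL2 d f) x =
      -∑ j, (f (x + Pi.single j 1) + f (x - Pi.single j 1) - 2 * f x) := by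
  rw [gradL2, adjoint_column_apply_column, lp.coeFn_sum, Finset.sum_apply, ← Finset.sum_neg_distrib]
  simp only [adjoint_partialL2_partialL2]

lemma phi_single (j : Fin d) (a : ℤ) : phi d j (Pi.single j a) = Complex.I * sqrtLapKernel a := by
  rw [phi, if_pos (by intro i hi; simp [hi]), Pi.single_eq_same, sqrtLapKernel]
  ring

lemma support_phi_subset (j : Fin d) :
    Function.support (phi d j) ⊆ Set.range fun a : ℤ => (Pi.single j a : Fin d → ℤ) := by
  refine fun k hk => ⟨k j, ?_⟩
  have hzero : ∀ i, i ≠ j → k i = 0 := by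
    by_contra h
    exact hk (if_neg h)
  ext i
  obtain rfl | hi := eq_or_ne i j
  · simp
  · simp [hi, hzero i hi]

lemma pd_apply (j : Fin d) (f : (Fin d → ℤ) → ℂ) (m : Fin d → ℤ) :
    pd j f m = ∑' a : ℤ, f (m - Pi.single j a) * (Complex.I * sqrtLapKernel a) := by
  have hsupport : Function.support (fun k => f (m - k) * phi d j k) ⊆
      Set.range fun a : ℤ => (Pi.single j a : Fin d → ℤ) :=
    (Function.support_mul_subset_right _ _).trans (support_phi_subset j)
  calc pd j f m = ∑' k, f (m - k) * phi d j k := by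
        rw [pd, dconv, ← (Equiv.subLeft m).tsum_eq]
        simp only [Equiv.subLeft_apply, sub_sub_cancel]
    _ = ∑' a : ℤ, f (m - Pi.single j a) * (Complex.I * sqrtLapKernel a) := by
        rw [← (Pi.single_injective (M := fun _ => ℤ) j).tsum_eq hsupport]
        simp only [phi_single]

lemma coe_partialL2 (j : Fin d) (f : L2 d) : ⇑(partialL2 j f) = pd j f := by
  ext m
  let τ : unitary (L2 d →L[ℂ] L2 d) := translation (.ofAdd (Pi.single j 1))
  have hseries := (hasSum_translation_zpow_apply (Pi.single j 1)
    (hasSum_sqrtLapKernel_smul_zpow τ) f m).mul_left Complex.I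
  have hpartial : partialL2 j f m = Complex.I * sqrtLaplacian τ f m := rfl
  rw [pd_apply, hpartial, ← hseries.tsum_eq]
  refine tsum_congr fun a => ?_
  rw [← Pi.single_smul, smul_eq_mul, mul_one]
  ring

end Gradient

section Norms

variable {d : ℕ}

lemma tsum_enorm_sq {α E : Type*} [NormedAddCommGroup E] (f : lp (fun _ : α => E) 2) :
    ∑' m, ‖f m‖ₑ ^ 2 = ‖f‖ₑ ^ 2 := by
  have h2 : 0 < (2 : ℝ≥0∞).toReal := by norm_num
  have hsq := lp.hasSum_norm h2 f
  simp only [ENNReal.toReal_ofNat, Real.rpow_ofNat] at hsq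
  simp only [← ofReal_norm, ← ENNReal.ofReal_pow (norm_nonneg _)]
  rw [← hsq.tsum_eq, ENNReal.ofReal_tsum_of_nonneg (fun m => sq_nonneg _) hsq.summable]

lemma lpn_two_eq (f : (Fin d → ℤ) → ℂ) : lpn 2 f = (∑' m, ‖f m‖ₑ ^ 2) ^ (1 / 2 : ℝ) := by
  simp [lpn, enorm_eq_nnnorm]

lemma lpn_two_coe (f : L2 d) : lpn 2 f = ‖f‖ₑ := by
  rw [lpn_two_eq, tsum_enorm_sq, ← ENNReal.rpow_natCast_mul]
  norm_num

lemma w2_zero (f : (Fin d → ℤ) → ℂ) : w2 0 f = lpn 2 f := by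
  simp [w2]

lemma memℓp_two_of_w2_lt_top {f : (Fin d → ℤ) → ℂ} (hf : w2 0 f < ⊤) : Memℓp f 2 := by
  have h2 : 0 < (2 : ℝ≥0∞).toReal := by norm_num
  rw [w2_zero, lpn_two_eq, ENNReal.rpow_lt_top_iff_of_pos (by norm_num)] at hf
  have hsum : ∑' m, ((‖f m‖₊ ^ 2 : ℝ≥0) : ℝ≥0∞) ≠ ⊤ := by
    simpa only [ENNReal.coe_pow, enorm_eq_nnnorm] using hf.ne
  rw [memℓp_gen_iff h2]
  simpa using NNReal.summable_coe.2 (ENNReal.tsum_coe_ne_top_iff_summable.1 hsum)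

lemma enorm_gradL2_sq (f : L2 d) : ‖gradL2 d f‖ₑ ^ 2 = ∑ j, ‖partialL2 j f‖ₑ ^ 2 := by
  have h : ‖gradL2 d f‖₊ ^ 2 = ∑ j, ‖partialL2 j f‖₊ ^ 2 := by
    rw [PiLp.nnnorm_eq_of_L2, NNReal.sq_sqrt]
    rfl
  simp only [enorm_eq_nnnorm]
  exact_mod_cast h

lemma enorm_toLp_prod_sq {E F : Type*} [SeminormedAddCommGroup E] [SeminormedAddCommGroup F]
    (x : E) (y : F) : ‖WithLp.toLp 2 (x, y)‖ₑ ^ 2 = ‖x‖ₑ ^ 2 + ‖y‖ₑ ^ 2 := by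
  have h : ‖WithLp.toLp 2 (x, y)‖₊ ^ 2 = ‖x‖₊ ^ 2 + ‖y‖₊ ^ 2 := by
    rw [WithLp.prod_nnnorm_eq_of_L2, NNReal.sq_sqrt, WithLp.toLp_fst, WithLp.toLp_snd]
  simp only [enorm_eq_nnnorm]
  exact_mod_cast h

lemma enorm_toLp_gradL2 (f v : L2 d) :
    ‖WithLp.toLp 2 (v, gradL2 d f)‖ₑ =
      (∑' m, (‖v m‖ₑ ^ 2 + ∑ j, ‖pd j f m‖ₑ ^ 2)) ^ (1 / 2 : ℝ) := by
  have hsq : ∑' m, (‖v m‖ₑ ^ 2 + ∑ j, ‖pd j f m‖ₑ ^ 2) =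
      ‖WithLp.toLp 2 (v, gradL2 d f)‖ₑ ^ 2 := by
    rw [ENNReal.tsum_add, Summable.tsum_finsetSum fun _ _ => ENNReal.summable, enorm_toLp_prod_sq,
      enorm_gradL2_sq]
    simp only [← coe_partialL2, tsum_enorm_sq]
  rw [hsq, ← ENNReal.rpow_natCast_mul]
  norm_num

end Norms

section Curves

variable {d : ℕ}

open scoped Classical in
/-- A function on `ℤ^d` as an element of `ℓ²(ℤ^d)`, with junk value `0` if it is not
square-summable; it turns pointwise-defined curves into curves in a Hilbert space. -/
def toL2 (f : (Fin d → ℤ) → ℂ) : L2 d :=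
  if h : Memℓp f 2 then ⟨f, h⟩ else 0

lemma coe_toL2 {f : (Fin d → ℤ) → ℂ} (hf : w2 0 f < ⊤) : ⇑(toL2 f) = f := by
  rw [toL2, dif_pos (memℓp_two_of_w2_lt_top hf)]

lemma energy_eq_enorm_toLp {f g : (Fin d → ℤ) → ℂ} (hf : w2 0 f < ⊤) (hg : w2 0 g < ⊤) :
    (∑' m, ((‖g m‖₊ : ℝ≥0∞) ^ 2 + ∑ j, (‖pd j f m‖₊ : ℝ≥0∞) ^ 2)) ^ (1 / 2 : ℝ) =
      ‖WithLp.toLp 2 (toL2 g, gradL2 d (toL2 f))‖ₑ := by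
  rw [enorm_toLp_gradL2, coe_toL2 hf, coe_toL2 hg]
  simp only [enorm_eq_nnnorm]

lemma lpn_two_sub_lap {f g : (Fin d → ℤ) → ℂ} (hf : w2 0 f < ⊤) (hg : w2 0 g < ⊤) :
    lpn 2 (fun x => g x - lap f x) =
      ‖toL2 g + (gradL2 d).adjoint (gradL2 d (toL2 f))‖ₑ := by
  rw [← lpn_two_coe]
  congr 1
  ext x
  rw [lp.coeFn_add, Pi.add_apply, adjoint_gradL2_gradL2, coe_toL2 hf, coe_toL2 hg, lap,
    sub_eq_add_neg]

lemma tendsto_zero_of_tendsto_w2 {ι : Type*} {l : Filter ι} {f : ι → L2 d}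
    (h : Tendsto (fun i => w2 0 (f i)) l (nhds 0)) : Tendsto f l (nhds 0) := by
  rw [tendsto_zero_iff_norm_tendsto_zero]
  simpa only [Function.comp_def, w2_zero, lpn_two_coe, toReal_enorm, ENNReal.toReal_zero] using
    (ENNReal.tendsto_toReal ENNReal.zero_ne_top).comp h

variable {S : Set ℝ} {f f' : ℝ → (Fin d → ℤ) → ℂ}

lemma ContW.continuousOn (hmem : ∀ t ∈ S, w2 0 (f t) < ⊤) (hf : ContW 0 S f) :
    ContinuousOn (fun t => toL2 (f t)) S := fun t ht => by
  refine tendsto_sub_nhds_zero_iff.1 (tendsto_zero_of_tendsto_w2 ((hf t ht).congr' ?_))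
  filter_upwards [self_mem_nhdsWithin] with s hs
  rw [lp.coeFn_sub, coe_toL2 (hmem s hs), coe_toL2 (hmem t ht)]
  rfl

lemma DerivW.hasDerivWithinAt (hmem : ∀ t ∈ S, w2 0 (f t) < ⊤)
    (hmem' : ∀ t ∈ S, w2 0 (f' t) < ⊤) (hf : DerivW 0 S f f') {t : ℝ} (ht : t ∈ S) :
    HasDerivWithinAt (fun t => toL2 (f t)) (toL2 (f' t)) S t := by
  rw [hasDerivWithinAt_iff_tendsto_slope]
  refine tendsto_sub_nhds_zero_iff.1 (tendsto_zero_of_tendsto_w2 ((hf t ht).congr' ?_))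
  filter_upwards [self_mem_nhdsWithin] with s hs
  rw [slope_def_module, lp.coeFn_sub, lp.coeFn_smul, lp.coeFn_sub, coe_toL2 (hmem s hs.1),
    coe_toL2 (hmem t ht), coe_toL2 (hmem' t ht)]
  rfl

end Curves

/-- sharp energy estimate for the discrete d'Alembert operator
`□ = ∂ₜ² - Δ`: `‖u'(·,t)‖_{ℓ²} ≤ ‖u'(·,0)‖_{ℓ²} + ∫₀ᵗ ‖□u(·,s)‖_{ℓ²} ds`,
where `‖u'(·,t)‖²_{ℓ²} = Σ_m(|∂ₜu(m,t)|² + Σⱼ|∂ⱼu(m,t)|²)`. -/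
theorem stmt19 (d : ℕ) (hd : 0 < d) (T : ℝ) (hT : 0 < T)
    (u u1 u2 : ℝ → (Fin d → ℤ) → ℂ)
    (hu : IsC2 0 (Set.Icc 0 T) u u1 u2) :
    ∀ t ∈ Set.Icc (0 : ℝ) T,
      (∑' m, ((‖u1 t m‖₊ : ℝ≥0∞) ^ 2 + ∑ j, (‖pd j (u t) m‖₊ : ℝ≥0∞) ^ 2)) ^ (1 / 2 : ℝ) ≤
        (∑' m, ((‖u1 0 m‖₊ : ℝ≥0∞) ^ 2 + ∑ j, (‖pd j (u 0) m‖₊ : ℝ≥0∞) ^ 2)) ^ (1 / 2 : ℝ) +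
          ∫⁻ s in Set.Icc (0 : ℝ) t, lpn 2 (fun x => u2 s x - lap (u s) x) := by
  intro t ht
  have hsub : Set.Icc 0 t ⊆ Set.Icc 0 T := Set.Icc_subset_Icc_right ht.2
  have hu1 : ∀ s ∈ Set.Icc 0 t,
      HasDerivWithinAt (fun s => toL2 (u s)) (toL2 (u1 s)) (Set.Icc 0 t) s := fun s hs =>
    (hu.hder1.hasDerivWithinAt hu.mem0 hu.mem1 (hsub hs)).mono hsub
  have hu2 : ∀ s ∈ Set.Icc 0 t,
      HasDerivWithinAt (fun s => toL2 (u1 s)) (toL2 (u2 s)) (Set.Icc 0 t) s := fun s hs =>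
    (hu.hder2.hasDerivWithinAt hu.mem1 hu.mem2 (hsub hs)).mono hsub
  have hu2_cont : ContinuousOn (fun s => toL2 (u2 s)) (Set.Icc 0 t) :=
    (hu.cont2.continuousOn hu.mem2).mono hsub
  have estimate := wave_energy_estimate (gradL2 d) ht.1 hu1 hu2 hu2_cont
  have energy_eq (s : ℝ) (hs : s ∈ Set.Icc 0 t) :=
    energy_eq_enorm_toLp (hu.mem0 s (hsub hs)) (hu.mem1 s (hsub hs))
  have box_eq (s : ℝ) (hs : s ∈ Set.Icc 0 t) :=
    lpn_two_sub_lap (hu.mem0 s (hsub hs)) (hu.mem2 s (hsub hs))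
  rw [energy_eq t (Set.right_mem_Icc.2 ht.1), energy_eq 0 (Set.left_mem_Icc.2 ht.1),
    setLIntegral_congr_fun measurableSet_Icc box_eq]
  exact estimate
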